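/- arXiv:2105.05142 — 2 statements merged into one kernel-verified Lean document; each statement's English description precedes it below -/
import Mathlib

section
/- Dominating set reduction: let G = (V, A) be a directed graph without self-loops on n vertices and k an integer, and consider the liquid democracy game on agent set V with utilities u_{ij} = 1 if (i,j) ∈ A and u_{ij} = 0 otherwise. Then G has a dominating set of size at most k (a set S ⊆ V with |S| ≤ k such that every vertex i ∉ S has an arc (i,j) ∈ A to some j ∈ S) if and only if the game has a pure strategy profile with social welfare at least n − k. -/
/-!
The correspondence behind the reduction: a set `S` of agents matches a profile in which exactly
the agents of `S` have utility `0`, so that the welfare is `n - |S|`.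

Given a dominating set `S`, let its members vote and let everyone else delegate to an out-neighbour
in `S`; by `guru_of_direct` that neighbour is the guru. Conversely, given a profile, let `S` be the
set of agents with utility `0`. An agent outside `S` has an arc to her guru `g`; since `g` votes
herself (`votes_of_guru`) she is her own guru, and as there are no self-loops her utility is `0`,
so `g ∈ S`.
-/

open Finset

/-- The guru of agent `i` under pure profile `s` (where `s i = some j` means `i`
delegates to `j`, with `s i = some i` meaning `i` votes herself, and `s i = none`
meaning `i` abstains): follow delegation arcs for `n` steps; the endpoint is the
guru provided it votes itself. -/
def guru {n : ℕ} (s : Fin n → Option (Fin n)) (i : Fin n) : Option (Fin n) :=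
  ((fun o => Option.bind o s)^[n] (some i)).bind
    (fun j => if s j = some j then some j else none)

/-- Utility of agent `i` in the pure profile `s`: `u i (g i)` if the guru exists, else `0`. -/
def pureUtil {n : ℕ} (u : Fin n → Fin n → ℝ) (s : Fin n → Option (Fin n)) (i : Fin n) : ℝ :=
  (guru s i).elim 0 (u i)

/-- A mixed strategy for a single agent: nonnegative, total probability at most one
(the residual probability is abstention). -/
def IsStrat {n : ℕ} (y : Fin n → ℝ) : Prop := (∀ j, 0 ≤ y j) ∧ (∑ j, y j) ≤ 1

/-- A mixed strategy profile. -/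
def IsMixed {n : ℕ} (x : Fin n → Fin n → ℝ) : Prop := ∀ i, IsStrat (x i)

/-- Probability that the independent randomization `x` produces the pure profile `s`. -/
def prob {n : ℕ} (x : Fin n → Fin n → ℝ) (s : Fin n → Option (Fin n)) : ℝ :=
  ∏ i, (s i).elim (1 - ∑ j, x i j) (x i)

/-- Expected utility of agent `i` under the mixed profile `x`. -/
def util {n : ℕ} (u x : Fin n → Fin n → ℝ) (i : Fin n) : ℝ :=
  ∑ s : Fin n → Option (Fin n), prob x s * pureUtil u s i

/-- Expected social welfare of the mixed profile `x`. -/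
def SW {n : ℕ} (u x : Fin n → Fin n → ℝ) : ℝ := ∑ i, util u x i

/-- The set of social-welfare values achievable by mixed profiles; `OPT` is its greatest element. -/
def SWvals {n : ℕ} (u : Fin n → Fin n → ℝ) : Set ℝ :=
  {w | ∃ x, IsMixed x ∧ w = SW u x}

/-- `x` is an `ε`-Nash equilibrium. -/
def EpsNash {n : ℕ} (u : Fin n → Fin n → ℝ) (ε : ℝ) (x : Fin n → Fin n → ℝ) : Prop :=
  ∀ i y, IsStrat y → util u x i ≥ (1 - ε) * util u (Function.update x i y) i

/-- `x` is an (exact, mixed) Nash equilibrium. -/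
def NashEq {n : ℕ} (u x : Fin n → Fin n → ℝ) : Prop :=
  ∀ i y, IsStrat y → util u x i ≥ util u (Function.update x i y) i

/-- A self-voter is a fixed point of the delegation step, so an agent who delegates directly to a
self-voter `j` (possibly `j` herself) has guru `j`: the first of the `n ≥ 1` steps reaches `j`. -/
lemma guru_of_direct {n : ℕ} {s : Fin n → Option (Fin n)} {i j : Fin n}
    (hij : s i = some j) (hj : s j = some j) : guru s i = some j := by
  obtain ⟨m, rfl⟩ : ∃ m, n = m + 1 := ⟨n - 1, by have := i.isLt; omega⟩
  unfold guru
  have hfix : (fun o => Option.bind o s)^[m] (some j) = some j :=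
    Function.iterate_fixed (by simpa using hj) m
  rw [Function.iterate_succ_apply]
  simp only [Option.bind_some, hij, hfix, hj, if_true]

lemma votes_of_guru {n : ℕ} {s : Fin n → Option (Fin n)} {i g : Fin n}
    (h : guru s i = some g) : s g = some g := by
  unfold guru at h
  obtain ⟨j, -, hj⟩ := Option.bind_eq_some_iff.mp h
  split_ifs at hj with hs
  cases hj
  exact hs

/-- Dominating set reduction: with utilities u i j = 1 iff (i,j) is an arc of a
self-loop-free digraph, the digraph has a dominating set of size at most k iff
the game has a pure profile with social welfare at least n - k. -/
theorem stmt13 {n : ℕ} (A : Fin n → Fin n → Prop) [DecidableRel A]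
    (hA : ∀ i, ¬ A i i) (k : ℕ)
    (u : Fin n → Fin n → ℝ) (hu : ∀ i j, u i j = if A i j then 1 else 0) :
    (∃ S : Finset (Fin n), S.card ≤ k ∧ ∀ i ∉ S, ∃ j ∈ S, A i j) ↔
    (∃ s : Fin n → Option (Fin n), (n : ℝ) - k ≤ ∑ i, pureUtil u s i) := by
  constructor
  · rintro ⟨S, hcard, hdom⟩
    choose d hdS hdA using hdom
    -- Members of `S` vote; every other agent delegates to a dominating out-neighbour in `S`.
    let s : Fin n → Option (Fin n) := fun i => if h : i ∈ S then some i else some (d i h)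
    have hvote : ∀ j ∈ S, s j = some j := fun j hj => by simp [s, hj]
    refine ⟨s, ?_⟩
    have hutil : ∀ i, pureUtil u s i = if i ∈ S then 0 else 1 := by
      intro i
      by_cases hi : i ∈ S
      · simp [pureUtil, guru_of_direct (hvote i hi) (hvote i hi), hu, hA, hi]
      · have hs : s i = some (d i hi) := by simp [s, hi]
        simp [pureUtil, guru_of_direct hs (hvote _ (hdS i hi)), hu, hdA, hi]
    have hsum : ∑ i, pureUtil u s i = (n : ℝ) - S.card := by
      have h1 : ∀ i, pureUtil u s i = 1 - (if i ∈ S then (1 : ℝ) else 0) := by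
        intro i
        rw [hutil]
        split_ifs <;> simp
      simp [h1, Finset.sum_sub_distrib]
    have hcard' : (S.card : ℝ) ≤ k := by exact_mod_cast hcard
    rw [hsum]
    linarith
  · rintro ⟨s, hs⟩
    -- The dominating set consists of the agents with utility `0`.
    let S : Finset (Fin n) := {i | ¬ ∃ g, guru s i = some g ∧ A i g}
    have hmem : ∀ i, i ∈ S ↔ ¬ ∃ g, guru s i = some g ∧ A i g := fun i => by simp [S]
    have hutil : ∀ i, pureUtil u s i = 1 - (if i ∈ S then (1 : ℝ) else 0) := by
      intro i
      simp only [hmem]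
      cases hg : guru s i with
      | none => simp [pureUtil, hg]
      | some g => by_cases hAg : A i g <;> simp [pureUtil, hg, hu, hAg]
    have hsum : ∑ i, pureUtil u s i = (n : ℝ) - S.card := by
      simp [hutil, Finset.sum_sub_distrib]
    refine ⟨S, ?_, ?_⟩
    · rw [hsum] at hs
      have : (S.card : ℝ) ≤ k := by linarith
      exact_mod_cast this
    · intro i hi
      rw [hmem, not_not] at hi
      obtain ⟨g, hg, hAg⟩ := hi
      refine ⟨g, (hmem g).mpr ?_, hAg⟩
      -- The guru of `i` is her own guru, and the digraph has no self-loops.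
      rintro ⟨g', hg', hAg'⟩
      have hgv := votes_of_guru hg
      rw [guru_of_direct hgv hgv] at hg'
      cases hg'
      exact hA g hAg'
end

section
/- Narcissistic-avaricious incentive guarantee: in any liquid democracy game, let p ∈ [0,1], and for each agent i let i* ∈ argmax_{j∈V} u_{ij}. Let z be the mixed profile in which each agent i votes herself with probability p and delegates to i* with probability 1−p. Then z is a (1 − p(1−p))-Nash equilibrium; in particular, u_i(z) ≥ p·u_{ii} + (1−p)·p·u_{i,i*} ≥ (1−p)·p·u_i(ẑ_i, z_{−i}) for every agent i and every mixed strategy ẑ_i. -/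
/-!
An agent `i` voting herself has guru `i`, and an agent delegating to a self-voter `j` has guru `j`.
Under the narcissistic-avaricious profile the first event has probability at least `p`; if
`istar i ≠ i`, then by independence the event "`i` delegates to `istar i` and `istar i` votes"
has probability at least `(1 - p) * p`. The two events are disjoint, which gives the lower bound
on the utility of `i`. If `istar i = i`, agent `i` votes with probability one and the bound reduces
to `2 * p - p ^ 2 ≤ 1`. For the upper bound, no profile gives `i` more than `u i (istar i)`.

The probabilistic input is `sum_prob_mul_prod`: the expectation of a product of functions of the
individual choices factors over the agents.
-/

open Finset

/-- The narcissistic-avaricious profile: each agent i votes herself with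
probability p and delegates to istar i with probability 1 - p. -/
def nazProfile {n : ℕ} (p : ℝ) (istar : Fin n → Fin n) : Fin n → Fin n → ℝ :=
  fun i j => (if j = i then p else 0) + (if j = istar i then 1 - p else 0)

/-- The probability that agent `k` makes the choice `o`, where `none` is abstention. -/
def choiceProb {n : ℕ} (x : Fin n → Fin n → ℝ) (k : Fin n) (o : Option (Fin n)) : ℝ :=
  o.elim (1 - ∑ j, x k j) (x k)

/-- Independence of the agents' choices. -/
lemma sum_prob_mul_prod {n : ℕ} (x : Fin n → Fin n → ℝ) (f : Fin n → Option (Fin n) → ℝ) :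
    ∑ s : Fin n → Option (Fin n), prob x s * ∏ k, f k (s k)
      = ∏ k, ∑ o, choiceProb x k o * f k o := by
  rw [Finset.prod_univ_sum, Fintype.piFinset_univ]
  refine Finset.sum_congr rfl fun s _ => ?_
  rw [Finset.prod_mul_distrib]
  rfl

lemma sum_prob {n : ℕ} (x : Fin n → Fin n → ℝ) :
    ∑ s : Fin n → Option (Fin n), prob x s = 1 := by
  simpa [choiceProb] using sum_prob_mul_prod x (fun _ _ => 1)

lemma sum_prob_single {n : ℕ} (x : Fin n → Fin n → ℝ) (i a : Fin n) :
    ∑ s : Fin n → Option (Fin n), prob x s * (if s i = some a then 1 else 0) = x i a := by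
  have h := sum_prob_mul_prod x
    (fun k o => if k = i then (if o = some a then 1 else 0) else 1)
  rw [Fintype.prod_eq_single i (by
    intro k hk
    simp [hk, choiceProb])] at h
  simpa [choiceProb] using h

lemma sum_prob_pair {n : ℕ} (x : Fin n → Fin n → ℝ) {i j : Fin n} (hij : i ≠ j) (a b : Fin n) :
    ∑ s : Fin n → Option (Fin n), prob x s *
      ((if s i = some a then 1 else 0) * (if s j = some b then 1 else 0)) = x i a * x j b := by
  have h := sum_prob_mul_prod x
    (fun k o => (if k = i then (if o = some a then 1 else 0) else 1) *
      (if k = j then (if o = some b then 1 else 0) else 1))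
  rw [Fintype.prod_eq_mul i j hij (by
    rintro k ⟨hk, hk'⟩
    simp [hk, hk', choiceProb])] at h
  simp only [Finset.prod_mul_distrib] at h
  simpa [choiceProb, hij, hij.symm] using h

lemma prob_nonneg {n : ℕ} {x : Fin n → Fin n → ℝ} (hx : IsMixed x)
    (s : Fin n → Option (Fin n)) : 0 ≤ prob x s := by
  refine Finset.prod_nonneg fun k _ => ?_
  cases s k with
  | none => simpa using (hx k).2
  | some j => exact (hx k).1 j

lemma guru_of_delegate {n : ℕ} {s : Fin n → Option (Fin n)} {i j : Fin n}
    (hi : s i = some j) (hj : s j = some j) : guru s i = some j := by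
  cases n with
  | zero => exact i.elim0
  | succ m =>
    have hfix : (fun o => Option.bind o s)^[m] (some j) = some j :=
      Function.iterate_fixed (by simp [hj]) m
    simp [guru, Function.iterate_succ, hi, hfix, hj]

lemma pureUtil_nonneg {n : ℕ} {u : Fin n → Fin n → ℝ} (hu : ∀ i j, 0 ≤ u i j)
    (s : Fin n → Option (Fin n)) (i : Fin n) : 0 ≤ pureUtil u s i := by
  unfold pureUtil
  cases guru s i with
  | none => simp
  | some j => exact hu i j

lemma self_le_util {n : ℕ} {u x : Fin n → Fin n → ℝ} (hu : ∀ i j, 0 ≤ u i j)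
    (hx : IsMixed x) (i : Fin n) : x i i * u i i ≤ util u x i := by
  rw [← sum_prob_single x i i, Finset.sum_mul]
  refine Finset.sum_le_sum fun s _ => ?_
  rw [mul_assoc]
  refine mul_le_mul_of_nonneg_left ?_ (prob_nonneg hx s)
  by_cases h : s i = some i
  · simp [h, pureUtil, guru_of_delegate h h]
  · simpa [h] using pureUtil_nonneg hu s i

/-- Voting oneself and delegating to a self-voter `j ≠ i` are disjoint events, so their
contributions to the utility add up. -/
lemma self_add_delegate_le_util {n : ℕ} {u x : Fin n → Fin n → ℝ} (hu : ∀ i j, 0 ≤ u i j)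
    (hx : IsMixed x) {i j : Fin n} (hij : i ≠ j) :
    x i i * u i i + x i j * x j j * u i j ≤ util u x i := by
  rw [← sum_prob_pair x hij j j, ← sum_prob_single x i i, Finset.sum_mul, Finset.sum_mul,
    ← Finset.sum_add_distrib]
  refine Finset.sum_le_sum fun s _ => ?_
  rw [mul_assoc, mul_assoc, ← mul_add]
  refine mul_le_mul_of_nonneg_left ?_ (prob_nonneg hx s)
  by_cases h : s i = some i
  · simp [h, hij, pureUtil, guru_of_delegate h h]
  · by_cases h' : s i = some j ∧ s j = some j
    · simp [h'.1, h'.2, hij.symm, pureUtil, guru_of_delegate h'.1 h'.2]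
    · have h0 := pureUtil_nonneg hu s i
      by_cases hi : s i = some j <;> by_cases hj : s j = some j <;> simp_all

lemma util_le {n : ℕ} {u x : Fin n → Fin n → ℝ} (hx : IsMixed x) {i : Fin n} {M : ℝ}
    (hM : 0 ≤ M) (hu : ∀ j, u i j ≤ M) : util u x i ≤ M := by
  calc util u x i ≤ ∑ s, prob x s * M := by
        refine Finset.sum_le_sum fun s _ => mul_le_mul_of_nonneg_left ?_ (prob_nonneg hx s)
        unfold pureUtil
        cases guru s i with
        | none => simpa using hM
        | some j => exact hu j
    _ = M := by rw [← Finset.sum_mul, sum_prob, one_mul]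

lemma isMixed_nazProfile {n : ℕ} {p : ℝ} (hp : p ∈ Set.Icc (0 : ℝ) 1) (istar : Fin n → Fin n) :
    IsMixed (nazProfile p istar) := by
  intro i
  refine ⟨fun j => ?_, ?_⟩
  · have h0 := hp.1
    have h1 := hp.2
    unfold nazProfile
    split_ifs <;> linarith
  · simp [nazProfile, Finset.sum_add_distrib]

lemma le_nazProfile_self {n : ℕ} {p : ℝ} (hp : p ∈ Set.Icc (0 : ℝ) 1) (istar : Fin n → Fin n)
    (i : Fin n) : p ≤ nazProfile p istar i i := by
  have h1 := hp.2
  unfold nazProfile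
  rw [if_pos rfl]
  split_ifs <;> linarith

/-- Narcissistic-avaricious incentive guarantee: z is a (1 - p(1-p))-Nash
equilibrium, and u_i(z) ≥ p·u_ii + (1-p)·p·u_{i,i*} ≥ (1-p)·p·u_i(ẑ_i, z₋ᵢ)
for every agent i and mixed strategy ẑᵢ. -/
theorem stmt15 {n : ℕ} (u : Fin n → Fin n → ℝ) (hu : ∀ i j, 0 ≤ u i j ∧ u i j ≤ 1)
    (p : ℝ) (hp : p ∈ Set.Icc (0:ℝ) 1)
    (istar : Fin n → Fin n) (histar : ∀ i j, u i j ≤ u i (istar i)) :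
    EpsNash u (1 - p*(1-p)) (nazProfile p istar) ∧
    ∀ i, p * u i i + (1-p) * p * u i (istar i) ≤ util u (nazProfile p istar) i ∧
      ∀ y : Fin n → ℝ, IsStrat y →
        (1-p) * p * util u (Function.update (nazProfile p istar) i y) i ≤
          p * u i i + (1-p) * p * u i (istar i) := by
  have hu0 : ∀ i j, 0 ≤ u i j := fun i j => (hu i j).1
  have hz := isMixed_nazProfile hp istar
  have hp0 := hp.1
  have hp1 : 0 ≤ 1 - p := sub_nonneg.2 hp.2
  have lower : ∀ i, p * u i i + (1-p) * p * u i (istar i) ≤ util u (nazProfile p istar) i := by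
    intro i
    by_cases hi : i = istar i
    · have h := self_le_util hu0 hz i
      have hii : nazProfile p istar i i = 1 := by
        rw [nazProfile, if_pos rfl, if_pos hi, add_sub_cancel]
      rw [hii] at h
      rw [← hi]
      -- the slack is `1 - p - (1 - p) * p = (1 - p) ^ 2`
      nlinarith [mul_nonneg (mul_nonneg hp1 hp1) (hu0 i i)]
    · refine le_trans ?_ (self_add_delegate_le_util hu0 hz hi)
      have hd : nazProfile p istar i (istar i) = 1 - p := by
        simp [nazProfile, Ne.symm hi]
      rw [hd]
      have h1 := le_nazProfile_self hp istar i
      have h2 := le_nazProfile_self hp istar (istar i)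
      have h3 := hu0 i i
      have h4 := hu0 i (istar i)
      gcongr
  have upper : ∀ i, ∀ y : Fin n → ℝ, IsStrat y →
      (1-p) * p * util u (Function.update (nazProfile p istar) i y) i ≤
        p * u i i + (1-p) * p * u i (istar i) := by
    intro i y hy
    have hx : IsMixed (Function.update (nazProfile p istar) i y) := by
      intro k
      by_cases hk : k = i
      · subst hk
        simpa using hy
      · simpa [hk] using hz k
    have h := mul_le_mul_of_nonneg_left (util_le hx (hu0 i (istar i)) (histar i))
      (mul_nonneg hp1 hp0)
    linarith [mul_nonneg hp0 (hu0 i i)]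
  refine ⟨fun i y hy => ?_, fun i => ⟨lower i, upper i⟩⟩
  have h := (upper i y hy).trans (lower i)
  rw [sub_sub_cancel, mul_comm p]
  exact h
end
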